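/- Let (x,t) be a social choice mechanism on an unrestricted parallel utility domain 𝒰 with |A| ≥ 3 that is DSIC, deterministic, onto, IR and satisfies no subsidy, and for distinct a,b ∈ A define L(a,b) := {α ∈ ℝ^n : there exists u ∈ 𝒰 with p_{i,a} − p_{i,b} = α_i for all i and x(u) = a}. Then for every α ∈ ℝ^n and every ε ∈ ℝ^n with ε_i > 0 for all i: (1) if α − ε ∈ L(a,b) then −α ∉ L(b,a); and (2) if α ∉ L(a,b) then −α ∈ L(b,a). -/

import Mathlib

/-!
Common framework: agents indexed by `I`, alternatives `A` (finite, nonempty).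
A type of an agent is a family `u : A → ℝ → ℝ`, where `u a z` is the utility
when alternative `a` is selected and the agent pays `z`.
-/

noncomputable section

namespace NQLSC

/-- A type (utility family) of an agent. -/
abbrev Util (A : Type*) := A → ℝ → ℝ

variable {A I : Type*}

/-- (S1): each `u a` is continuous and strictly decreasing in the payment. -/
def S1 (u : Util A) : Prop := ∀ a, Continuous (u a) ∧ StrictAnti (u a)

/-- `min_{a'∈A} u_{a'}(0)`, the value of the worst alternative at zero payment. -/
def minVal [Fintype A] [Nonempty A] (u : Util A) : ℝ :=
  Finset.univ.inf' Finset.univ_nonempty (fun a => u a 0)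

/-- (S2): as the payment tends to `+∞`, the utility of every alternative drops
(strictly) below `min_{a'} u_{a'}(0)`; for strictly decreasing utilities this is
equivalent to the utility being below that value at some payment. -/
def S2 [Fintype A] [Nonempty A] (u : Util A) : Prop :=
  ∀ a, ∃ z : ℝ, u a z < minVal u

/-- The willingness to pay `p_a = u_a⁻¹(min_{a'} u_{a'}(0))` (under (S1),(S2) this
`sInf` is the unique payment at which `u a` attains `minVal u`). -/
def wtp [Fintype A] [Nonempty A] (u : Util A) (a : A) : ℝ :=
  sInf {z : ℝ | u a z ≤ minVal u}

/-- A parallel type: (S1), (S2), and for all `a, b` with `v_a ≥ v_b` and all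
`z ∈ [0, p_b]`, `u_a (z + (p_a − p_b)) = u_b z`. -/
def IsParallel [Fintype A] [Nonempty A] (u : Util A) : Prop :=
  S1 u ∧ S2 u ∧ ∀ a b : A, u b 0 ≤ u a 0 → ∀ z : ℝ, 0 ≤ z → z ≤ wtp u b →
    u a (z + (wtp u a - wtp u b)) = u b z

/-- Unrestricted willingness to pay: every nonnegative vector with a zero entry is
the willingness-to-pay vector of some type in the domain. -/
def UnrestrictedWTP [Fintype A] [Nonempty A] (U : Set (Util A)) : Prop :=
  ∀ lam : A → ℝ, (∀ a, 0 ≤ lam a) → (∃ a, lam a = 0) →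
    ∃ u ∈ U, ∀ a, wtp u a = lam a

/-- Dominant-strategy incentive compatibility of a (deterministic) mechanism `(x,t)`
on the domain `𝒰 = ∏ i, U i`. -/
def DSIC [DecidableEq I] (U : I → Set (Util A)) (x : (I → Util A) → A)
    (t : (I → Util A) → I → ℝ) : Prop :=
  ∀ uh : I → Util A, (∀ j, uh j ∈ U j) → ∀ i, ∀ ui ∈ U i,
    ui (x uh) (t uh i) ≤
      ui (x (Function.update uh i ui)) (t (Function.update uh i ui) i)

/-- Individual rationality. -/
def IR [Fintype A] [Nonempty A] [DecidableEq I] (U : I → Set (Util A))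
    (x : (I → Util A) → A) (t : (I → Util A) → I → ℝ) : Prop :=
  ∀ uh : I → Util A, (∀ j, uh j ∈ U j) → ∀ i, ∀ ui ∈ U i,
    minVal ui ≤ ui (x (Function.update uh i ui)) (t (Function.update uh i ui) i)

/-- No subsidy: the mechanism never makes positive transfers to an agent. -/
def NoSubsidy (U : I → Set (Util A)) (t : (I → Util A) → I → ℝ) : Prop :=
  ∀ u : I → Util A, (∀ j, u j ∈ U j) → ∀ i, 0 ≤ t u i

/-- Ontoness of the choice rule on the given domain. -/
def OntoMech (U : I → Set (Util A)) (x : (I → Util A) → A) : Prop :=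
  ∀ a, ∃ u : I → Util A, (∀ j, u j ∈ U j) ∧ x u = a

/-- The set `L(a,b)` of vectors of willingness-to-pay differences `p_{·,a} − p_{·,b}`
realizable by a profile in the domain at which `a` is selected. -/
def Lset [Fintype A] [Nonempty A] (U : I → Set (Util A)) (x : (I → Util A) → A)
    (a b : A) : Set (I → ℝ) :=
  {α | ∃ u : I → Util A, (∀ j, u j ∈ U j) ∧
        (∀ i, wtp (u i) a - wtp (u i) b = α i) ∧ x u = a}

section Wtp

variable [Fintype A] [Nonempty A]

theorem minVal_le (u : Util A) (a : A) : minVal u ≤ u a 0 :=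
  Finset.inf'_le _ (Finset.mem_univ a)

/-- Under (S1) and (S2) the willingness to pay is the payment at which `u a` equals `minVal u`. -/
theorem apply_wtp {u : Util A} (h1 : S1 u) (h2 : S2 u) (a : A) : u a (wtp u a) = minVal u := by
  obtain ⟨z, hz⟩ := h2 a
  obtain ⟨p, hp⟩ := mem_range_of_exists_le_of_exists_ge (h1 a).1 ⟨z, hz.le⟩ ⟨0, minVal_le u a⟩
  have hset : {z : ℝ | u a z ≤ minVal u} = Set.Ici p := by
    ext y
    simp only [Set.mem_ofPred_eq, Set.mem_Ici, ← hp, (h1 a).2.le_iff_ge]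
  rw [wtp, hset, csInf_Ici, hp]

theorem minVal_le_apply_iff {u : Util A} (h1 : S1 u) (h2 : S2 u) (a : A) (z : ℝ) :
    minVal u ≤ u a z ↔ z ≤ wtp u a := by
  rw [← apply_wtp h1 h2 a, (h1 a).2.le_iff_ge]

/-- A parallel type ranks outcomes with nonnegative payments quasi-linearly, as long as the
preferred one is individually rational. -/
theorem IsParallel.wtp_sub_le {u : Util A} (h : IsParallel u) {a b : A} {s r : ℝ}
    (hs : 0 ≤ s) (hr : 0 ≤ r) (hir : minVal u ≤ u a s) (hle : u b r ≤ u a s) :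
    wtp u b - r ≤ wtp u a - s := by
  obtain ⟨h1, h2, hp⟩ := h
  have hsa : s ≤ wtp u a := (minVal_le_apply_iff h1 h2 a s).1 hir
  rcases le_or_gt r (wtp u b) with hrb | hrb
  · rcases le_total (u b 0) (u a 0) with hab | hab
    · rw [← hp a b hab r hr hrb, (h1 a).2.le_iff_ge] at hle
      linarith
    · rw [← hp b a hab s hs hsa, (h1 b).2.le_iff_ge] at hle
      linarith
  · linarith

/-- In a domain with unrestricted willingness to pay, all differences of willingness to pay
can be prescribed. -/
theorem UnrestrictedWTP.exists_wtp_sub_eq {V : Set (Util A)} (h : UnrestrictedWTP V)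
    (lam : A → ℝ) : ∃ u ∈ V, ∀ a b, wtp u a - wtp u b = lam a - lam b := by
  obtain ⟨m, hm⟩ := Finite.exists_min lam
  obtain ⟨u, hu, hw⟩ := h (fun a => lam a - lam m) (fun a => sub_nonneg.2 (hm a)) ⟨m, sub_self _⟩
  exact ⟨u, hu, fun a b => by rw [hw, hw]; ring⟩

/-- If agent `i`'s willingness to pay for the selected alternative strictly increases relative
to every other alternative, the selection does not change. -/
theorem choice_update_eq [DecidableEq I] {U : I → Set (Util A)}
    (hpar : ∀ i, ∀ u ∈ U i, IsParallel u) {x : (I → Util A) → A} {t : (I → Util A) → I → ℝ}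
    (hDSIC : DSIC U x t) (hIR : IR U x t) (hNS : NoSubsidy U t)
    {u : I → Util A} (hu : ∀ j, u j ∈ U j) {i : I} {w : Util A} (hw : w ∈ U i)
    (hlt : ∀ c, c ≠ x u → wtp (u i) (x u) - wtp (u i) c < wtp w (x u) - wtp w c) :
    x (Function.update u i w) = x u := by
  have hu' : ∀ j, Function.update u i w j ∈ U j := by
    intro j
    rcases eq_or_ne j i with rfl | hj
    · simpa using hw
    · simpa [hj] using hu j
  have hback : Function.update (Function.update u i w) i (u i) = u := by simp
  have deviate := hDSIC _ hu' i (u i) (hu i)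
  have rational := hIR _ hu' i (u i) (hu i)
  rw [hback] at deviate rational
  have hold := (hpar i _ (hu i)).wtp_sub_le (hNS u hu i) (hNS _ hu' i) rational deviate
  have hnew := (hpar i _ hw).wtp_sub_le (hNS _ hu' i) (hNS u hu i) (hIR u hu i w hw)
    (hDSIC u hu i w hw)
  by_contra hne
  have := hlt _ hne
  linarith

/-- If every agent's willingness to pay for the selected alternative strictly increases relative
to every other alternative, the selection does not change. -/
theorem choice_eq_of_wtp_sub_lt [Fintype I] [DecidableEq I] {U : I → Set (Util A)}
    (hpar : ∀ i, ∀ u ∈ U i, IsParallel u) {x : (I → Util A) → A} {t : (I → Util A) → I → ℝ}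
    (hDSIC : DSIC U x t) (hIR : IR U x t) (hNS : NoSubsidy U t)
    {u w : I → Util A} (hu : ∀ j, u j ∈ U j) (hw : ∀ j, w j ∈ U j)
    (hlt : ∀ i c, c ≠ x u → wtp (u i) (x u) - wtp (u i) c < wtp (w i) (x u) - wtp (w i) c) :
    x w = x u := by
  suffices h : ∀ s : Finset I, x (s.piecewise w u) = x u by simpa using h Finset.univ
  intro s
  induction s using Finset.induction_on with
  | empty => simp
  | insert i s hi ih =>
    have hmem : ∀ j, s.piecewise w u j ∈ U j := fun j => by
      by_cases hj : j ∈ s <;> simp [hj, hu j, hw j]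
    rw [Finset.piecewise_insert, ← ih]
    refine choice_update_eq hpar hDSIC hIR hNS hmem (hw i) fun c hc => ?_
    rw [ih] at hc ⊢
    simpa [hi] using hlt i c hc

/-- If `a` is selected at `u`, and every agent's willingness to pay for `a` relative to `b` is
strictly higher at `w`, then `b` is not selected at `w`. -/
theorem choice_ne_of_wtp_sub_lt [Fintype I] [DecidableEq I] {U : I → Set (Util A)}
    (hpar : ∀ i, ∀ u ∈ U i, IsParallel u) (hunr : ∀ i, UnrestrictedWTP (U i))
    {x : (I → Util A) → A} {t : (I → Util A) → I → ℝ}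
    (hDSIC : DSIC U x t) (hIR : IR U x t) (hNS : NoSubsidy U t)
    {a b : A} (hab : a ≠ b) {u w : I → Util A} (hu : ∀ j, u j ∈ U j) (hw : ∀ j, w j ∈ U j)
    (hxu : x u = a)
    (hlt : ∀ i, wtp (u i) a - wtp (u i) b < wtp (w i) a - wtp (w i) b) :
    x w ≠ b := by
  classical
  intro hxw
  choose d hd using fun i => exists_between (hlt i)
  choose z hz hzd using fun i => (hunr i).exists_wtp_sub_eq fun c =>
    if c = a then d i else if c = b then 0 else
      min (d i - (wtp (u i) a - wtp (u i) c)) (-(wtp (w i) b - wtp (w i) c)) - 1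
  have hza : x z = a := by
    rw [← hxu]
    refine choice_eq_of_wtp_sub_lt hpar hDSIC hIR hNS hu hz fun i c hc => ?_
    rw [hxu] at hc ⊢
    rw [hzd i a c]
    by_cases hcb : c = b
    · subst hcb
      simpa [hc] using (hd i).1
    · simp only [if_true, if_neg hc, if_neg hcb]
      linarith [min_le_left (d i - (wtp (u i) a - wtp (u i) c)) (-(wtp (w i) b - wtp (w i) c))]
  have hzb : x z = b := by
    rw [← hxw]
    refine choice_eq_of_wtp_sub_lt hpar hDSIC hIR hNS hw hz fun i c hc => ?_
    rw [hxw] at hc ⊢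
    rw [hzd i b c]
    by_cases hca : c = a
    · subst hca
      simp only [if_true, if_neg hab.symm]
      linarith [(hd i).2]
    · simp only [if_true, if_neg hc, if_neg hca, if_neg hab.symm]
      linarith [min_le_right (d i - (wtp (u i) a - wtp (u i) c)) (-(wtp (w i) b - wtp (w i) c))]
  exact hab (hza.symm.trans hzb)

end Wtp

/-- Properties of the sets `L(a,b)` for a DSIC, deterministic, onto,
IR, no-subsidy mechanism on an unrestricted parallel utility domain with `|A| ≥ 3`. -/
theorem Lset_claim_two
    [Fintype A] [Nonempty A] [Fintype I] [DecidableEq I]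
    (hA : 3 ≤ Fintype.card A)
    (U : I → Set (Util A))
    (hpar : ∀ i, ∀ u ∈ U i, IsParallel u)
    (hunr : ∀ i, UnrestrictedWTP (U i))
    (x : (I → Util A) → A) (t : (I → Util A) → I → ℝ)
    (hDSIC : DSIC U x t) (hOnto : OntoMech U x)
    (hIR : IR U x t) (hNS : NoSubsidy U t) :
    ∀ a b : A, a ≠ b → ∀ α ε : I → ℝ, (∀ i, 0 < ε i) →
      ((α - ε ∈ Lset U x a b → -α ∉ Lset U x b a) ∧
       (α ∉ Lset U x a b → -α ∈ Lset U x b a)) := by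
  classical
  intro a b hab α ε hε
  refine ⟨?_, fun hα => ?_⟩
  · rintro ⟨u, hu, hud, hxu⟩ ⟨w, hw, hwd, hxw⟩
    refine choice_ne_of_wtp_sub_lt hpar hunr hDSIC hIR hNS hab hu hw hxu (fun i => ?_) hxw
    have h1 := hud i
    have h2 := hwd i
    simp only [Pi.sub_apply, Pi.neg_apply] at h1 h2
    linarith [hε i]
  · obtain ⟨v, hv, hxv⟩ := hOnto b
    choose w hw hwd using fun i => (hunr i).exists_wtp_sub_eq fun c =>
      if c = a then α i else if c = b then 0 else -(wtp (v i) b - wtp (v i) c) - 1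
    have hwab : ∀ i, wtp (w i) a - wtp (w i) b = α i := fun i => by
      rw [hwd i a b]
      simp [hab.symm]
    refine ⟨w, hw, fun i => by rw [Pi.neg_apply, ← hwab i]; ring, ?_⟩
    by_contra hxb
    have hxa : x w ≠ a := fun h => hα ⟨w, hw, hwab, h⟩
    refine choice_ne_of_wtp_sub_lt hpar hunr hDSIC hIR hNS (Ne.symm hxb) hv hw hxv
      (fun i => ?_) rfl
    rw [hwd i b (x w)]
    simp only [if_true, if_neg hab.symm, if_neg hxa, if_neg hxb]
    linarith
end NQLSC
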